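/- Let ρ and σ be density operators on a finite-dimensional complex Hilbert space with supp(ρ) ⊆ supp(σ). Then for every α ∈ [1/2, 1) ∪ (1, ∞), the measured Rényi divergence is dominated by the sandwiched Rényi divergence: D_α^𝕄(ρ‖σ) ≤ D_α^*(ρ‖σ). -/

import Mathlib

open Matrix
open scoped ComplexOrder Kronecker

noncomputable section

/-- Real power of a Hermitian matrix via functional calculus on its support
(Moore–Penrose convention); junk value `0` for non-Hermitian input. -/
def Matrix.rpowH {ι : Type*} [Fintype ι] [DecidableEq ι] (A : Matrix ι ι ℂ) (p : ℝ) :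
    Matrix ι ι ℂ :=
  if hA : A.IsHermitian then
    (hA.eigenvectorUnitary : Matrix ι ι ℂ) *
      Matrix.diagonal (fun i => ((hA.eigenvalues i ^ p : ℝ) : ℂ)) *
      star (hA.eigenvectorUnitary : Matrix ι ι ℂ)
  else 0

/-- Real part of the trace. -/
def retr {ι : Type*} [Fintype ι] (A : Matrix ι ι ℂ) : ℝ :=
  (Matrix.trace A).re

open scoped Classical in
/-- Classical Rényi divergence of order `α` of two (finitely supported) probability
mass functions, with value `+∞` when `α > 1` and absolute continuity fails. -/
def renyiDivE (α : ℝ) {k : ℕ} (p q : Fin k → ℝ) : EReal :=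
  if α < 1 ∨ ∀ i, q i = 0 → p i = 0 then
    (((α - 1)⁻¹ * Real.log (∑ i, p i ^ α * q i ^ (1 - α)) : ℝ) : EReal)
  else (⊤ : EReal)

/-- Measured Rényi divergence: supremum of classical Rényi divergences of the outcome
distributions over all finite POVMs. -/
def measuredRenyiDiv {ι : Type*} [Fintype ι] [DecidableEq ι]
    (α : ℝ) (ρ σ : Matrix ι ι ℂ) : EReal :=
  ⨆ (k : ℕ) (P : Fin k → Matrix ι ι ℂ) (_ : ∀ i, (P i).PosSemidef) (_ : ∑ i, P i = 1),
    renyiDivE α (fun i => retr (ρ * P i)) (fun i => retr (σ * P i))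


/-- Sandwiched Rényi divergence
`D_α^*(ρ‖σ) = (α-1)⁻¹ log Tr[(σ^{(1-α)/(2α)} ρ σ^{(1-α)/(2α)})^α]`. -/
def sandwichedRenyiDiv {ι : Type*} [Fintype ι] [DecidableEq ι]
    (α : ℝ) (ρ σ : Matrix ι ι ℂ) : ℝ :=
  (α - 1)⁻¹ * Real.log (retr (Matrix.rpowH
    (Matrix.rpowH σ ((1 - α) / (2 * α)) * ρ * Matrix.rpowH σ ((1 - α) / (2 * α))) α))

/-! ### Scalar complex powers -/

/-- Complex power of a nonnegative real, with `0 ^ z = 0` for every `z`. -/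
def cp (x : ℝ) (z : ℂ) : ℂ := if x ≤ 0 then 0 else Complex.exp (z * Real.log x)

lemma cp_add (x : ℝ) (z w : ℂ) : cp x (z + w) = cp x z * cp x w := by
  unfold cp
  split_ifs
  · simp
  · rw [add_mul, Complex.exp_add]

lemma star_cp (x : ℝ) (z : ℂ) : star (cp x z) = cp x (star z) := by
  unfold cp
  split_ifs
  · simp
  · simp [← Complex.exp_conj]

lemma norm_cp {x : ℝ} (hx : 0 < x) (z : ℂ) : ‖cp x z‖ = x ^ z.re := by
  unfold cp
  rw [if_neg hx.not_ge, Complex.norm_exp, Real.rpow_def_of_pos hx]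
  simp [mul_comm]

lemma norm_cp_le_one (x : ℝ) {z : ℂ} (hz : z.re = 0) : ‖cp x z‖ ≤ 1 := by
  by_cases hx : x ≤ 0
  · simp [cp, hx]
  · rw [norm_cp (not_le.1 hx), hz]; simp

lemma cp_ofReal {x : ℝ} (hx : 0 < x) (p : ℝ) : cp x (p : ℂ) = ((x ^ p : ℝ) : ℂ) := by
  unfold cp
  rw [if_neg hx.not_ge, Real.rpow_def_of_pos hx]
  push_cast
  rw [mul_comm]

lemma cp_ofReal_of_ne {x : ℝ} (hx : 0 ≤ x) {p : ℝ} (hp : p ≠ 0) :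
    cp x (p : ℂ) = ((x ^ p : ℝ) : ℂ) := by
  rcases hx.eq_or_lt with h | h
  · subst h; simp [cp, Real.zero_rpow hp]
  · exact cp_ofReal h p

/-! ### Bounded holomorphic functions on the strip -/

/-- Entire functions bounded on the closed unit strip. -/
def Good (f : ℂ → ℂ) : Prop :=
  Differentiable ℂ f ∧ ∃ C : ℝ, ∀ z : ℂ, 0 ≤ z.re → z.re ≤ 1 → ‖f z‖ ≤ C

lemma Good.const (c : ℂ) : Good (fun _ => c) :=
  ⟨by fun_prop, ‖c‖, fun _ _ _ => le_rfl⟩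

lemma Good.mul {f g : ℂ → ℂ} (hf : Good f) (hg : Good g) : Good (fun z => f z * g z) := by
  obtain ⟨hf1, C, hC⟩ := hf
  obtain ⟨hg1, D, hD⟩ := hg
  refine ⟨hf1.mul hg1, C * D, fun z h0 h1 => ?_⟩
  rw [norm_mul]
  exact mul_le_mul (hC z h0 h1) (hD z h0 h1) (norm_nonneg _) ((norm_nonneg _).trans (hC z h0 h1))

lemma Good.sum {κ : Type*} (s : Finset κ) {f : κ → ℂ → ℂ} (hf : ∀ k, Good (f k)) :
    Good (fun z => ∑ k ∈ s, f k z) := by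
  choose h1 C hC using hf
  refine ⟨by fun_prop, ∑ k ∈ s, C k, fun z h0 h1 => ?_⟩
  exact (norm_sum_le _ _).trans (Finset.sum_le_sum fun k _ => hC k z h0 h1)

lemma Good.cp (x a b : ℝ) : Good (fun z => cp x (a + b * z)) := by
  unfold _root_.cp
  by_cases hx : x ≤ 0
  · simpa [hx] using Good.const 0
  · simp only [hx, if_false]
    refine ⟨by fun_prop, Real.exp ((|a| + |b|) * |Real.log x|), fun z h0 h1 => ?_⟩
    rw [Complex.norm_exp, Real.exp_le_exp]
    simp only [Complex.mul_re, Complex.add_re, Complex.ofReal_re, Complex.ofReal_im, zero_mul,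
      sub_zero, mul_zero]
    refine (le_abs_self _).trans ?_
    rw [abs_mul]
    refine mul_le_mul_of_nonneg_right ?_ (abs_nonneg _)
    refine (abs_add_le _ _).trans (add_le_add le_rfl ?_)
    rw [abs_mul]
    exact mul_le_of_le_one_right (abs_nonneg _) (by rw [abs_of_nonneg h0]; exact h1)

lemma Good.three_lines {f : ℂ → ℂ} (hf : Good f) {a b t : ℝ} (h0 : 0 ≤ t) (h1 : t ≤ 1)
    (ha : ∀ z : ℂ, z.re = 0 → ‖f z‖ ≤ a) (hb : ∀ z : ℂ, z.re = 1 → ‖f z‖ ≤ b) :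
    ‖f t‖ ≤ a ^ (1 - t) * b ^ t := by
  obtain ⟨hd, C, hC⟩ := hf
  have := Complex.HadamardThreeLines.norm_le_interp_of_mem_verticalClosedStrip₀₁' f (z := (t : ℂ))
    (a := a) (b := b) (by simp [Complex.HadamardThreeLines.verticalClosedStrip, h0, h1])
    hd.diffContOnCl
    (by
      refine ⟨C, ?_⟩
      rintro _ ⟨z, hz, rfl⟩
      exact hC z hz.1 hz.2)
    (fun z hz => ha z hz) (fun z hz => hb z hz)
  simpa using this

section Toolkit

set_option linter.unusedSectionVars false

variable {ι : Type*} [Fintype ι] [DecidableEq ι]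

/-- Matrix functions with good entries. -/
def GoodM (M : ℂ → Matrix ι ι ℂ) : Prop := ∀ i j, Good (fun z => M z i j)

lemma GoodM.const (M : Matrix ι ι ℂ) : GoodM (fun _ => M) := fun _ _ => Good.const _

lemma GoodM.mul {M N : ℂ → Matrix ι ι ℂ} (hM : GoodM M) (hN : GoodM N) :
    GoodM (fun z => M z * N z) := by
  intro i j
  simp only [Matrix.mul_apply]
  exact Good.sum _ fun k => (hM i k).mul (hN k j)

lemma GoodM.sum {κ : Type*} (s : Finset κ) {M : κ → ℂ → Matrix ι ι ℂ} (hM : ∀ k, GoodM (M k)) :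
    GoodM (fun z => ∑ k ∈ s, M k z) := by
  intro i j
  simp only [Matrix.sum_apply]
  exact Good.sum _ fun k => hM k i j

lemma GoodM.smul {f : ℂ → ℂ} {M : ℂ → Matrix ι ι ℂ} (hf : Good f) (hM : GoodM M) :
    GoodM (fun z => f z • M z) := by
  intro i j
  simp only [Matrix.smul_apply, smul_eq_mul]
  exact hf.mul (hM i j)

lemma GoodM.trace {M : ℂ → Matrix ι ι ℂ} (hM : GoodM M) : Good (fun z => (M z).trace) := by
  simp only [Matrix.trace, Matrix.diag]
  exact Good.sum _ fun k => hM k k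

/-! ### Frobenius norm squared -/

/-- Squared Frobenius norm. -/
def frob (M : Matrix ι ι ℂ) : ℝ := ∑ i, ∑ j, ‖M i j‖ ^ 2

lemma frob_nonneg (M : Matrix ι ι ℂ) : 0 ≤ frob M := by unfold frob; positivity

lemma frob_conjTranspose (M : Matrix ι ι ℂ) : frob Mᴴ = frob M := by
  unfold frob
  rw [Finset.sum_comm]
  simp [Matrix.conjTranspose_apply]

lemma trace_mul_conjTranspose_eq (M : Matrix ι ι ℂ) : (M * Mᴴ).trace = (frob M : ℂ) := by
  simp only [Matrix.trace, Matrix.diag, Matrix.mul_apply, Matrix.conjTranspose_apply, frob]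
  push_cast
  refine Finset.sum_congr rfl fun i _ => Finset.sum_congr rfl fun j _ => ?_
  exact Complex.mul_conj' _

lemma trace_conjTranspose_mul_eq (M : Matrix ι ι ℂ) : (Mᴴ * M).trace = (frob M : ℂ) := by
  rw [Matrix.trace_mul_comm, trace_mul_conjTranspose_eq]

lemma norm_trace_mul_le (A B : Matrix ι ι ℂ) : ‖(A * B).trace‖ ≤ √(frob A) * √(frob B) := by
  rw [← frob_conjTranspose B]
  simp only [Matrix.trace, Matrix.diag, Matrix.mul_apply, frob, Matrix.conjTranspose_apply]
  rw [← Finset.sum_product', ← Finset.sum_product', ← Finset.sum_product']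
  refine (norm_sum_le _ _).trans ?_
  simp only [norm_mul, norm_star]
  exact Real.sum_mul_le_sqrt_mul_sqrt _ (fun x : ι × ι => ‖A x.1 x.2‖) (fun x => ‖B x.2 x.1‖)

lemma trace_eq_frob (S R : Matrix ι ι ℂ) : (S * Sᴴ * (Rᴴ * R)).trace = (frob (R * S) : ℂ) := by
  rw [← trace_mul_conjTranspose_eq, Matrix.conjTranspose_mul, ← Matrix.mul_assoc (S * Sᴴ),
    Matrix.trace_mul_comm]
  simp only [Matrix.mul_assoc]

lemma frob_eq_zero {M : Matrix ι ι ℂ} (h1 : frob M = 0) : M = 0 := by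
  ext i j
  unfold frob at h1
  rw [Finset.sum_eq_zero_iff_of_nonneg (fun _ _ => by positivity)] at h1
  have := h1 i (Finset.mem_univ _)
  rw [Finset.sum_eq_zero_iff_of_nonneg (fun _ _ => by positivity)] at this
  simpa using this j (Finset.mem_univ _)

lemma le_of_le_sqrt_mul {x y : ℝ} (hx : 0 ≤ x) (hy : 0 ≤ y) (h : x ≤ √x * √y) : x ≤ y := by
  rcases hx.eq_or_lt with h0 | h0
  · rw [← h0]; exact hy
  · have hs : 0 < √x := Real.sqrt_pos.2 h0
    have h2 : √x * √x = x := Real.mul_self_sqrt hx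
    have h3 : √x ≤ √y := le_of_mul_le_mul_left (by rw [h2]; exact h) hs
    exact (Real.sqrt_le_sqrt_iff hy).1 h3

/-- Left multiplication by `C` is a contraction. -/
def Contr (C : Matrix ι ι ℂ) : Prop := ∀ M, frob (C * M) ≤ frob M

lemma Contr.mul {C D : Matrix ι ι ℂ} (hC : Contr C) (hD : Contr D) : Contr (C * D) := fun M => by
  rw [Matrix.mul_assoc]; exact (hC _).trans (hD M)

lemma Contr.of_adj {C : Matrix ι ι ℂ} (hC : Contr Cᴴ) : Contr C := by
  intro M
  refine le_of_le_sqrt_mul (frob_nonneg _) (frob_nonneg _) ?_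
  have e : ((frob (C * M) : ℝ) : ℂ) = ((Cᴴ * (C * M))ᴴ * M).trace := by
    rw [← trace_conjTranspose_mul_eq, Matrix.conjTranspose_mul Cᴴ, Matrix.conjTranspose_conjTranspose,
      Matrix.mul_assoc]
  calc frob (C * M) = ‖((frob (C * M) : ℝ) : ℂ)‖ := by
        rw [Complex.norm_real, Real.norm_of_nonneg (frob_nonneg _)]
    _ ≤ √(frob (Cᴴ * (C * M))) * √(frob M) := by
        rw [e, ← frob_conjTranspose (Cᴴ * (C * M))]; exact norm_trace_mul_le _ _
    _ ≤ _ := by gcongr; exact hC _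

/-! ### Complex powers of positive semidefinite matrices -/

variable {A : Matrix ι ι ℂ}

/-- Complex power on the support. -/
def mp (hA : A.PosSemidef) (z : ℂ) : Matrix ι ι ℂ :=
  (hA.1.eigenvectorUnitary : Matrix ι ι ℂ) *
      Matrix.diagonal (fun i => cp (hA.1.eigenvalues i) z) *
      star (hA.1.eigenvectorUnitary : Matrix ι ι ℂ)

lemma star_mul_U (hA : A.PosSemidef) : star (hA.1.eigenvectorUnitary : Matrix ι ι ℂ) *
    (hA.1.eigenvectorUnitary : Matrix ι ι ℂ) = 1 := by simp

lemma U_mul_star (hA : A.PosSemidef) : (hA.1.eigenvectorUnitary : Matrix ι ι ℂ) *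
    star (hA.1.eigenvectorUnitary : Matrix ι ι ℂ) = 1 := by simp

lemma mp_add (hA : A.PosSemidef) (z w : ℂ) : mp hA (z + w) = mp hA z * mp hA w := by
  unfold mp
  have h := star_mul_U hA
  set U := (hA.1.eigenvectorUnitary : Matrix ι ι ℂ)
  have : U * Matrix.diagonal (fun i => cp (hA.1.eigenvalues i) z) * star U *
      (U * Matrix.diagonal (fun i => cp (hA.1.eigenvalues i) w) * star U)
      = U * (Matrix.diagonal (fun i => cp (hA.1.eigenvalues i) z) * (star U * U) *
      Matrix.diagonal (fun i => cp (hA.1.eigenvalues i) w)) * star U := by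
    simp only [Matrix.mul_assoc]
  rw [this, h, Matrix.mul_one, Matrix.diagonal_mul_diagonal]
  simp only [cp_add]

lemma mp_conjTranspose (hA : A.PosSemidef) (z : ℂ) : (mp hA z)ᴴ = mp hA (star z) := by
  unfold mp
  rw [Matrix.conjTranspose_mul, Matrix.conjTranspose_mul, Matrix.diagonal_conjTranspose]
  simp only [← Matrix.star_eq_conjTranspose, star_star, Matrix.mul_assoc]
  congr 3
  funext i
  exact star_cp _ _

lemma rpowH_eq (hA : A.PosSemidef) {p : ℝ} (hp : p ≠ 0) : Matrix.rpowH A p = mp hA p := by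
  unfold Matrix.rpowH mp
  rw [dif_pos hA.1]
  congr 3
  funext i
  exact (cp_ofReal_of_ne (hA.eigenvalues_nonneg i) hp).symm

lemma mp_one (hA : A.PosSemidef) : mp hA 1 = A := by
  have h := hA.1.spectral_theorem
  rw [Unitary.conjStarAlgAut_apply] at h
  conv_rhs => rw [h]
  unfold mp
  congr 3
  funext i
  have := cp_ofReal_of_ne (hA.eigenvalues_nonneg i) (one_ne_zero)
  simpa using this

lemma mp_good (hA : A.PosSemidef) (a b : ℝ) : GoodM (fun z => mp hA (a + b * z)) := by
  unfold mp
  refine GoodM.mul (GoodM.mul (GoodM.const _) ?_) (GoodM.const _)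
  intro i j
  by_cases h : i = j
  · subst h; simpa using Good.cp _ a b
  · simpa [h] using Good.const 0

lemma unitary_frob {U : Matrix ι ι ℂ} (h : star U * U = 1) (M : Matrix ι ι ℂ) :
    frob (U * M) = frob M := by
  have : (((frob (U * M) : ℝ)) : ℂ) = frob M := by
    rw [← trace_conjTranspose_mul_eq, ← trace_conjTranspose_mul_eq, Matrix.conjTranspose_mul]
    rw [Matrix.mul_assoc, ← Matrix.mul_assoc Uᴴ, ← Matrix.star_eq_conjTranspose U, h,
      Matrix.one_mul]
  exact_mod_cast this

lemma mp_contr (hA : A.PosSemidef) {z : ℂ} (hz : z.re = 0) : Contr (mp hA z) := by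
  intro M
  unfold mp
  rw [Matrix.mul_assoc, Matrix.mul_assoc, unitary_frob (star_mul_U hA)]
  rw [← unitary_frob (U := star (hA.1.eigenvectorUnitary : Matrix ι ι ℂ))
    (by rw [star_star]; exact U_mul_star hA) M]
  unfold frob
  refine Finset.sum_le_sum fun i _ => Finset.sum_le_sum fun j _ => ?_
  rw [Matrix.diagonal_mul, norm_mul]
  have := norm_cp_le_one (hA.1.eigenvalues i) hz
  gcongr
  exact mul_le_of_le_one_left (norm_nonneg _) this

lemma mp_self_adj (hA : A.PosSemidef) (p : ℝ) : (mp hA p)ᴴ = mp hA p := by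
  rw [mp_conjTranspose]; simp

lemma mp_mul_star (hA : A.PosSemidef) (z : ℂ) :
    mp hA z * (mp hA z)ᴴ = mp hA ((2 * z.re : ℝ) : ℂ) := by
  rw [mp_conjTranspose, ← mp_add]
  congr 1
  apply Complex.ext <;> simp; ring

lemma frob_mp (hA : A.PosSemidef) (z : ℂ) : frob (mp hA z) = retr (mp hA ((2 * z.re : ℝ) : ℂ)) := by
  rw [← mp_mul_star, retr, trace_mul_conjTranspose_eq]; simp

lemma trace_mp (hA : A.PosSemidef) (p : ℝ) : (mp hA p).trace = (retr (mp hA p) : ℂ) := by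
  have : mp hA p = mp hA ((p/2 : ℝ) : ℂ) * (mp hA ((p/2 : ℝ) : ℂ))ᴴ := by
    rw [mp_mul_star]; congr 2; simp; ring
  rw [retr, this, trace_mul_conjTranspose_eq]; simp

lemma mp_eq_zero_of (hA : A.PosSemidef) (p : ℝ) (h : retr (mp hA p) = 0) : A = 0 := by
  have h1 : frob (mp hA ((p/2 : ℝ) : ℂ)) = 0 := by rw [frob_mp, ← h]; congr 3; simp; ring
  have h2 : mp hA ((p/2 : ℝ) : ℂ) = 0 := frob_eq_zero h1
  rw [← mp_one hA, show (1 : ℂ) = ((p/2 : ℝ) : ℂ) + (1 - ((p/2 : ℝ) : ℂ)) by ring, mp_add, h2]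
  simp

lemma mul_mp_zero {B : Matrix ι ι ℂ} (hA : A.PosSemidef)
    (hsupp : ∀ v : ι → ℂ, A.mulVec v = 0 → B.mulVec v = 0) : B * mp hA 0 = B := by
  have h1 : A * (1 - mp hA 0) = 0 := by
    have : A * mp hA 0 = A := by
      nth_rewrite 1 [← mp_one hA]
      rw [← mp_add, add_zero, mp_one]
    rw [Matrix.mul_sub, this]; simp
  have h2 : B * (1 - mp hA 0) = 0 := by
    ext i j
    have h3 : A.mulVec (fun k => (1 - mp hA 0) k j) = 0 := by
      funext i
      exact congrFun (congrFun h1 i) j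
    exact congrFun (hsupp _ h3) i
  rw [Matrix.mul_sub, Matrix.mul_one] at h2
  exact (sub_eq_zero.1 h2).symm

/-! ### Kadison-type inequality for POVMs -/

lemma mp_half_mul (hA : A.PosSemidef) :
    mp hA ((1/2 : ℝ) : ℂ) * mp hA ((1/2 : ℝ) : ℂ) = A := by
  rw [← mp_add, ← Complex.ofReal_add]; norm_num; exact mp_one _

lemma povm_total {k : ℕ} {P : Fin k → Matrix ι ι ℂ} (hP : ∀ i, (P i).PosSemidef)
    (hsum : ∑ i, P i = 1) (L : Matrix ι ι ℂ) :
    ∑ i, frob (mp (hP i) ((1/2 : ℝ) : ℂ) * L) = frob L := by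
  have hR := fun i => mp_half_mul (hP i)
  have : ((∑ i, frob (mp (hP i) ((1/2 : ℝ) : ℂ) * L) : ℝ) : ℂ) = (frob L : ℂ) := by
    rw [← trace_conjTranspose_mul_eq, Complex.ofReal_sum]
    simp only [← trace_conjTranspose_mul_eq]
    rw [← Matrix.trace_sum]
    congr 1
    have : ∀ i, (mp (hP i) ((1/2 : ℝ) : ℂ) * L)ᴴ * (mp (hP i) ((1/2 : ℝ) : ℂ) * L)
        = Lᴴ * P i * L := fun i => by
      rw [Matrix.conjTranspose_mul, mp_self_adj]; conv_rhs => rw [← hR i]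
      simp only [Matrix.mul_assoc]
    simp only [this]
    rw [← Matrix.sum_mul, ← Matrix.mul_sum, hsum, Matrix.mul_one]
  exact_mod_cast this

lemma kadison {k : ℕ} {P : Fin k → Matrix ι ι ℂ} (hP : ∀ i, (P i).PosSemidef)
    (hsum : ∑ i, P i = 1) (u : Fin k → ℂ) (M : Matrix ι ι ℂ) :
    frob ((∑ i, u i • P i) * M) ≤
      ∑ i, ‖u i‖ ^ 2 * frob (mp (hP i) ((1/2 : ℝ) : ℂ) * M) := by
  have tot := povm_total hP hsum
  have hR := fun i => mp_half_mul (hP i)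
  have hRs : ∀ i, (mp (hP i) ((1/2 : ℝ) : ℂ))ᴴ = mp (hP i) ((1/2 : ℝ) : ℂ) :=
    fun i => mp_self_adj _ _
  obtain ⟨N, hN⟩ : ∃ N, N = (∑ i, u i • P i) * M := ⟨_, rfl⟩
  rw [← hN]
  refine le_of_le_sqrt_mul (frob_nonneg _)
    (Finset.sum_nonneg fun i _ => mul_nonneg (by positivity) (frob_nonneg _)) ?_
  have e : ((frob N : ℝ) : ℂ) = ∑ i, u i * ((mp (hP i) ((1/2 : ℝ) : ℂ) * N)ᴴ *
      (mp (hP i) ((1/2 : ℝ) : ℂ) * M)).trace := by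
    rw [← trace_conjTranspose_mul_eq]
    nth_rewrite 2 [hN]
    rw [Matrix.sum_mul, Matrix.mul_sum, Matrix.trace_sum]
    refine Finset.sum_congr rfl fun i _ => ?_
    rw [Matrix.smul_mul, Matrix.mul_smul, Matrix.trace_smul, smul_eq_mul,
      Matrix.conjTranspose_mul _ N, hRs]
    congr 2
    conv_lhs => rw [← hR i]
    simp only [Matrix.mul_assoc]
  calc frob N = ‖((frob N : ℝ) : ℂ)‖ := by
        rw [Complex.norm_real, Real.norm_of_nonneg (frob_nonneg _)]
    _ ≤ ∑ i, √(frob (mp (hP i) ((1/2 : ℝ) : ℂ) * N)) *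
          √(‖u i‖ ^ 2 * frob (mp (hP i) ((1/2 : ℝ) : ℂ) * M)) := by
        rw [e]
        refine (norm_sum_le _ _).trans (Finset.sum_le_sum fun i _ => ?_)
        rw [norm_mul, Real.sqrt_mul (by positivity), Real.sqrt_sq (norm_nonneg _)]
        have := norm_trace_mul_le (mp (hP i) ((1/2 : ℝ) : ℂ) * N)ᴴ (mp (hP i) ((1/2 : ℝ) : ℂ) * M)
        rw [frob_conjTranspose] at this
        calc _ ≤ ‖u i‖ * _ := mul_le_mul_of_nonneg_left this (norm_nonneg _)
          _ = _ := by ring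
    _ ≤ √(∑ i, frob (mp (hP i) ((1/2 : ℝ) : ℂ) * N)) *
          √(∑ i, ‖u i‖ ^ 2 * frob (mp (hP i) ((1/2 : ℝ) : ℂ) * M)) :=
        Real.sum_sqrt_mul_sqrt_le _ (fun i => frob_nonneg _)
          (fun i => mul_nonneg (by positivity) (frob_nonneg _))
    _ = _ := by rw [tot]

lemma povm_contr {k : ℕ} {P : Fin k → Matrix ι ι ℂ} (hP : ∀ i, (P i).PosSemidef)
    (hsum : ∑ i, P i = 1) (u : Fin k → ℂ) (hu : ∀ i, ‖u i‖ ≤ 1) : Contr (∑ i, u i • P i) := by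
  intro M
  refine (kadison hP hsum u M).trans ?_
  rw [← povm_total hP hsum M]
  refine Finset.sum_le_sum fun i _ => mul_le_of_le_one_left (frob_nonneg _) ?_
  exact pow_le_one₀ (norm_nonneg _) (hu i)

/-! ### Scalar identities -/

lemma cp_zero_left (z : ℂ) : cp 0 z = 0 := by simp [cp]

lemma exp_setup {p q : ℝ} (hp : 0 ≤ p) (hq : 0 ≤ q) (hpq : q = 0 → p = 0) :
    p = 0 ∨ ∃ a b, p = Real.exp a ∧ q = Real.exp b := by
  by_cases h : p = 0
  · exact Or.inl h
  · have hp' : 0 < p := lt_of_le_of_ne hp (Ne.symm h)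
    have hq' : 0 < q := lt_of_le_of_ne hq (fun h' => h (hpq h'.symm))
    exact Or.inr ⟨Real.log p, Real.log q, (Real.exp_log hp').symm, (Real.exp_log hq').symm⟩

lemma scal1 {p q α : ℝ} (hp : 0 ≤ p) (hq : 0 ≤ q) (hpq : q = 0 → p = 0) (hα : α ≠ 0)
    {z : ℂ} (hz : z.re = α) : ‖cp (p / q) z‖ * q = p ^ α * q ^ (1 - α) := by
  rcases exp_setup hp hq hpq with rfl | ⟨a, b, rfl, rfl⟩
  · simp [cp_zero_left, Real.zero_rpow hα]
  · rw [norm_cp (by positivity), hz, ← Real.exp_sub]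
    simp only [← Real.exp_mul, ← Real.exp_add]
    congr 1; ring

lemma scal2 {p q α : ℝ} (hp : 0 ≤ p) (hq : 0 ≤ q) (hpq : q = 0 → p = 0) (hα : α ≠ 0) :
    cp (p / q) ((α - 1 : ℝ) : ℂ) * p = ((p ^ α * q ^ (1 - α) : ℝ) : ℂ) := by
  rcases exp_setup hp hq hpq with rfl | ⟨a, b, rfl, rfl⟩
  · simp [Real.zero_rpow hα]
  · rw [cp_ofReal (by positivity), ← Complex.ofReal_mul, ← Real.exp_sub]
    simp only [← Real.exp_mul, ← Real.exp_add]
    congr 2; ring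

lemma scal3 {p q α : ℝ} (hp : 0 ≤ p) (hq : 0 ≤ q) (hpq : q = 0 → p = 0) (hα : α ≠ 0)
    {z : ℂ} (hz : z.re = (α - 1) / 2) : ‖cp (p / q) z‖ ^ 2 * p = p ^ α * q ^ (1 - α) := by
  rcases exp_setup hp hq hpq with rfl | ⟨a, b, rfl, rfl⟩
  · simp [Real.zero_rpow hα]
  · rw [norm_cp (by positivity), hz, ← Real.exp_sub, pow_two]
    simp only [← Real.exp_mul, ← Real.exp_add]
    congr 1; ring

lemma scal4 {p q α : ℝ} (hp : 0 ≤ p) (hq : 0 ≤ q) (hpq : q = 0 → p = 0) (hα : α ≠ 0)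
    {z : ℂ} (hz : z.re = α - 1 / 2) : ‖cp (p / q) z‖ * (√p * √q) = p ^ α * q ^ (1 - α) := by
  rcases exp_setup hp hq hpq with rfl | ⟨a, b, rfl, rfl⟩
  · simp [Real.zero_rpow hα]
  · rw [norm_cp (by positivity), hz, ← Real.exp_sub, ← Real.exp_half, ← Real.exp_half]
    simp only [← Real.exp_mul, ← Real.exp_add]
    congr 1; ring

/-! ### The two interpolation arguments -/

lemma frob_half {P : Matrix ι ι ℂ} (hP : P.PosSemidef) {S : Matrix ι ι ℂ} (hS : S * Sᴴ = A) :
    frob (mp hP ((1/2 : ℝ) : ℂ) * S) = retr (A * P) := by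
  have := trace_eq_frob S (mp hP ((1/2 : ℝ) : ℂ))
  rw [hS, mp_self_adj, mp_half_mul] at this
  rw [retr, this]; simp

lemma frob_half' {P : Matrix ι ι ℂ} (hP : P.PosSemidef) {S : Matrix ι ι ℂ} (hS : Sᴴ * S = A) :
    frob (S * mp hP ((1/2 : ℝ) : ℂ)) = retr (A * P) := by
  rw [← frob_conjTranspose, Matrix.conjTranspose_mul, mp_self_adj]
  exact frob_half hP (by rw [Matrix.conjTranspose_conjTranspose]; exact hS)

lemma trace_real {P : Matrix ι ι ℂ} (hA : A.PosSemidef) (hP : P.PosSemidef) :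
    (A * P).trace = (retr (A * P) : ℂ) := by
  have hS : mp hA ((1/2 : ℝ) : ℂ) * (mp hA ((1/2 : ℝ) : ℂ))ᴴ = A := by
    rw [mp_self_adj, mp_half_mul]
  have := trace_eq_frob (mp hA ((1/2 : ℝ) : ℂ)) (mp hP ((1/2 : ℝ) : ℂ))
  rw [hS, mp_self_adj, mp_half_mul] at this
  rw [retr, this]; simp

lemma retr_nonneg' {P : Matrix ι ι ℂ} (hA : A.PosSemidef) (hP : P.PosSemidef) :
    0 ≤ retr (A * P) := by
  have hS : mp hA ((1/2 : ℝ) : ℂ) * (mp hA ((1/2 : ℝ) : ℂ))ᴴ = A := by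
    rw [mp_self_adj, mp_half_mul]
  rw [← frob_half hP hS]; exact frob_nonneg _

lemma mp_mul_star_one (hA : A.PosSemidef) {z : ℂ} (hz : z.re = 1 / 2) :
    mp hA z * (mp hA z)ᴴ = A := by
  rw [mp_mul_star, hz]; norm_num; exact mp_one _

lemma star_mul_mp_one (hA : A.PosSemidef) {z : ℂ} (hz : z.re = 1 / 2) :
    (mp hA z)ᴴ * mp hA z = A := by
  have := mp_mul_star_one hA (z := star z) (by simpa using hz)
  rwa [← mp_conjTranspose, Matrix.conjTranspose_conjTranspose] at this

lemma core_gt {ρ σ X : Matrix ι ι ℂ} (hρ : ρ.PosSemidef) (hσ : σ.PosSemidef) (hX : X.PosSemidef)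
    {α : ℝ} (hα : 1 < α)
    (hXρ : mp hσ (((α - 1) / (2 * α) : ℝ) : ℂ) * X * mp hσ (((α - 1) / (2 * α) : ℝ) : ℂ) = ρ)
    {k : ℕ} {P : Fin k → Matrix ι ι ℂ} (hP : ∀ i, (P i).PosSemidef) (hsum : ∑ i, P i = 1)
    (hpq : ∀ i, retr (σ * P i) = 0 → retr (ρ * P i) = 0) :
    ∑ i, retr (ρ * P i) ^ α * retr (σ * P i) ^ (1 - α) ≤
      retr (mp hX α) ^ (1 - (α - 1) / α) *
      (∑ i, retr (ρ * P i) ^ α * retr (σ * P i) ^ (1 - α)) ^ ((α - 1) / α) := by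
  have hα0 : 0 < α := by linarith
  set w : Fin k → ℝ := fun i => retr (ρ * P i) / retr (σ * P i) with hw
  set F : ℂ → ℂ := fun z => (mp hX ((α : ℝ) + ((-α : ℝ) : ℂ) * z) *
    (mp hσ (((0 : ℝ) : ℂ) + ((1 / 2 : ℝ) : ℂ) * z) *
      (∑ i, cp (w i) (((0 : ℝ) : ℂ) + (α : ℂ) * z) • P i) *
      mp hσ (((0 : ℝ) : ℂ) + ((1 / 2 : ℝ) : ℂ) * z))).trace with hF
  have hgood : Good F := by
    refine GoodM.trace ?_
    refine (mp_good hX _ _).mul (((mp_good hσ _ _).mul ?_).mul (mp_good hσ _ _))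
    exact GoodM.sum _ fun i => GoodM.smul (Good.cp _ _ _) (GoodM.const _)
  have ht0 : 0 ≤ (α - 1) / α := div_nonneg (by linarith) hα0.le
  have ht1 : (α - 1) / α ≤ 1 := by rw [div_le_one hα0]; linarith
  have hFt : F (((α - 1) / α : ℝ) : ℂ) =
      ((∑ i, retr (ρ * P i) ^ α * retr (σ * P i) ^ (1 - α) : ℝ) : ℂ) := by
    have e1 : ((α : ℝ) + ((-α : ℝ) : ℂ) * (((α - 1) / α : ℝ) : ℂ)) = 1 := by
      rw [← Complex.ofReal_mul, ← Complex.ofReal_add, ← Complex.ofReal_one]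
      congr 1; field_simp; ring
    have e2 : (((0 : ℝ) : ℂ) + ((1 / 2 : ℝ) : ℂ) * (((α - 1) / α : ℝ) : ℂ)) =
        (((α - 1) / (2 * α) : ℝ) : ℂ) := by
      rw [← Complex.ofReal_mul, ← Complex.ofReal_add]
      congr 1; field_simp; ring
    have e3 : (((0 : ℝ) : ℂ) + (α : ℂ) * (((α - 1) / α : ℝ) : ℂ)) = ((α - 1 : ℝ) : ℂ) := by
      rw [← Complex.ofReal_mul, ← Complex.ofReal_add]
      congr 1; field_simp; ring
    simp only [hF]
    rw [e1, e2, e3, mp_one, ← Matrix.mul_assoc, Matrix.trace_mul_comm]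
    rw [← Matrix.mul_assoc, ← Matrix.mul_assoc, hXρ, Matrix.mul_sum, Matrix.trace_sum]
    push_cast
    refine Finset.sum_congr rfl fun i _ => ?_
    rw [Matrix.mul_smul, Matrix.trace_smul, smul_eq_mul, trace_real hρ (hP i)]
    have := scal2 (retr_nonneg' hρ (hP i)) (retr_nonneg' hσ (hP i)) (hpq i) hα0.ne'
    push_cast at this
    exact this
  have h := hgood.three_lines ht0 ht1 (a := retr (mp hX α))
    (b := ∑ i, retr (ρ * P i) ^ α * retr (σ * P i) ^ (1 - α)) ?_ ?_
  · rw [hFt, Complex.norm_real] at h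
    exact (le_abs_self _).trans h
  · intro z hz
    simp only [hF]
    have hW := povm_contr hP hsum (fun i => cp (w i) (((0 : ℝ) : ℂ) + (α : ℂ) * z))
      (fun i => norm_cp_le_one _ (by simp [hz]))
    have hV : Contr (mp hσ (((0 : ℝ) : ℂ) + ((1 / 2 : ℝ) : ℂ) * z)) :=
      mp_contr hσ (by simp [hz])
    have hC := (hV.mul hW).mul hV
    rw [show ((α : ℝ) + ((-α : ℝ) : ℂ) * z : ℂ) =
      ((α / 2 : ℝ) : ℂ) + (((α / 2 : ℝ) : ℂ) + ((-α : ℝ) : ℂ) * z) by push_cast; ring, mp_add,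
      Matrix.mul_assoc, Matrix.trace_mul_comm, Matrix.mul_assoc]
    refine (norm_trace_mul_le _ _).trans ?_
    have h1 : frob (mp hX (((α / 2 : ℝ) : ℂ) + ((-α : ℝ) : ℂ) * z)) = retr (mp hX α) := by
      rw [frob_mp]; congr 3; simp [hz]; ring
    have h2 : frob (mp hX ((α / 2 : ℝ) : ℂ)) = retr (mp hX α) := by
      rw [frob_mp]; congr 3; simp; ring
    have h3 := hC (mp hX ((α / 2 : ℝ) : ℂ))
    rw [h2] at h3
    rw [h1]
    have h4 : 0 ≤ retr (mp hX α) := by rw [← h2]; exact frob_nonneg _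
    calc _ ≤ √(retr (mp hX α)) * √(retr (mp hX α)) := by gcongr
      _ = _ := Real.mul_self_sqrt h4
  · intro z hz
    simp only [hF]
    rw [Matrix.mul_sum, Matrix.sum_mul, Matrix.mul_sum, Matrix.trace_sum]
    refine (norm_sum_le _ _).trans (Finset.sum_le_sum fun i _ => ?_)
    rw [Matrix.mul_smul, Matrix.smul_mul, Matrix.mul_smul, Matrix.trace_smul, smul_eq_mul,
      norm_mul, ← scal1 (retr_nonneg' hρ (hP i)) (retr_nonneg' hσ (hP i)) (hpq i) hα0.ne'
      (z := ((0 : ℝ) : ℂ) + (α : ℂ) * z) (by simp [hz])]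
    refine mul_le_mul_of_nonneg_left ?_ (norm_nonneg _)
    set S := mp hσ (((0 : ℝ) : ℂ) + ((1 / 2 : ℝ) : ℂ) * z) with hS
    set Y := mp hX ((α : ℝ) + ((-α : ℝ) : ℂ) * z)
    have hY : Contr Y := mp_contr hX (by simp [hz])
    have eP : Y * (S * P i * S) =
        (Y * (S * mp (hP i) ((1/2 : ℝ) : ℂ))) * (mp (hP i) ((1/2 : ℝ) : ℂ) * S) := by
      conv_lhs => rw [← mp_half_mul (hP i)]
      simp only [Matrix.mul_assoc]
    rw [eP]
    refine (norm_trace_mul_le _ _).trans ?_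
    have h1 := hY (S * mp (hP i) ((1/2 : ℝ) : ℂ))
    rw [frob_half' (hP i) (star_mul_mp_one hσ (by simp [hz]))] at h1
    rw [frob_half (hP i) (mp_mul_star_one hσ (by simp [hz]))]
    calc _ ≤ √(retr (σ * P i)) * √(retr (σ * P i)) := by gcongr
      _ = _ := Real.mul_self_sqrt (retr_nonneg' hσ (hP i))

set_option maxHeartbeats 1000000 in
lemma core_lt {ρ σ X : Matrix ι ι ℂ} (hρ : ρ.PosSemidef) (hσ : σ.PosSemidef) (hX : X.PosSemidef)
    {α : ℝ} (hα : 1 / 2 ≤ α) (hα1 : α < 1)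
    (hXρ : X = mp hσ (((1 - α) / (2 * α) : ℝ) : ℂ) * ρ * mp hσ (((1 - α) / (2 * α) : ℝ) : ℂ))
    {k : ℕ} {P : Fin k → Matrix ι ι ℂ} (hP : ∀ i, (P i).PosSemidef) (hsum : ∑ i, P i = 1)
    (hpq : ∀ i, retr (σ * P i) = 0 → retr (ρ * P i) = 0) :
    retr (mp hX α) ≤ (√(retr (mp hX α)) *
      √(∑ i, retr (ρ * P i) ^ α * retr (σ * P i) ^ (1 - α))) ^ (1 - (1 - α) / α) *
      (∑ i, retr (ρ * P i) ^ α * retr (σ * P i) ^ (1 - α)) ^ ((1 - α) / α) := by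
  have hα0 : 0 < α := by linarith
  set w : Fin k → ℝ := fun i => retr (ρ * P i) / retr (σ * P i) with hw
  set H := mp hρ ((1/2 : ℝ) : ℂ) with hH
  have hHs : Hᴴ = H := mp_self_adj _ _
  have hHH : H * H = ρ := mp_half_mul hρ
  set V := mp hσ (((1 - α) / (2 * α) : ℝ) : ℂ) with hV
  have hVs : Vᴴ = V := mp_self_adj _ _
  set G := mp hX ((-(1/2) : ℝ) : ℂ) * V * H with hG
  have hXH : X = V * H * (H * V) := by
    rw [hXρ, ← hHH]; simp only [Matrix.mul_assoc]
  have hXmp : V * H * (H * V) = mp hX 1 := hXH.symm.trans (mp_one hX).symm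
  have hGG : G * Gᴴ = mp hX 0 := by
    rw [hG, Matrix.conjTranspose_mul, Matrix.conjTranspose_mul, hHs, hVs, mp_self_adj]
    have : mp hX ((-(1/2) : ℝ) : ℂ) * V * H * (H * (V * mp hX ((-(1/2) : ℝ) : ℂ))) =
      mp hX ((-(1/2) : ℝ) : ℂ) * (V * H * (H * V)) * mp hX ((-(1/2) : ℝ) : ℂ) := by
      simp only [Matrix.mul_assoc]
    rw [this, hXmp, ← mp_add, ← mp_add]
    congr 1; push_cast; ring
  clear_value G
  have hGc : Contr G := by
    refine Contr.of_adj fun M => ?_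
    have h0 : frob (Gᴴ * M) = frob (mp hX 0 * M) := by
      have : ((frob (Gᴴ * M) : ℝ) : ℂ) = frob (mp hX 0 * M) := by
        rw [← trace_conjTranspose_mul_eq, ← trace_conjTranspose_mul_eq,
          Matrix.conjTranspose_mul Gᴴ, Matrix.conjTranspose_mul, Matrix.conjTranspose_conjTranspose,
          mp_conjTranspose]
        have a1 : Mᴴ * G * (Gᴴ * M) = Mᴴ * (G * Gᴴ) * M := by simp only [Matrix.mul_assoc]
        have a2 : Mᴴ * mp hX (star 0) * (mp hX 0 * M) =
          Mᴴ * (mp hX (star 0) * mp hX 0) * M := by simp only [Matrix.mul_assoc]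
        rw [a1, a2, hGG, ← mp_add]; simp
      exact_mod_cast this
    rw [h0]
    exact mp_contr hX (by simp) M
  set F : ℂ → ℂ := fun z => (mp hX (((α / 2 : ℝ) : ℂ) + ((-(α / 2) : ℝ) : ℂ) * z) *
    (G * (H *
      (∑ i, cp (w i) ((((α - 1) / 2 : ℝ) : ℂ) + ((α / 2 : ℝ) : ℂ) * z) • P i) *
      mp hσ (((0 : ℝ) : ℂ) + ((1 / 2 : ℝ) : ℂ) * z)))).trace with hF
  have hgood : Good F := by
    refine GoodM.trace ?_
    refine (mp_good hX _ _).mul ((GoodM.const _).mul (((GoodM.const _).mul ?_).mul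
      (mp_good hσ _ _)))
    exact GoodM.sum _ fun i => GoodM.smul (Good.cp _ _ _) (GoodM.const _)
  have ht0 : 0 ≤ (1 - α) / α := div_nonneg (by linarith) hα0.le
  have ht1 : (1 - α) / α ≤ 1 := by rw [div_le_one hα0]; linarith
  have hS : H * Hᴴ = ρ := by rw [hHs, hHH]
  have hS' : Hᴴ * H = ρ := by rw [hHs, hHH]
  have hFt : F (((1 - α) / α : ℝ) : ℂ) = ((retr (mp hX α) : ℝ) : ℂ) := by
    have e1 : ((α / 2 : ℝ) : ℂ) + ((-(α / 2) : ℝ) : ℂ) * (((1 - α) / α : ℝ) : ℂ) =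
        ((α - 1 / 2 : ℝ) : ℂ) := by
      rw [← Complex.ofReal_mul, ← Complex.ofReal_add]
      congr 1; field_simp; ring
    have e2 : (((0 : ℝ) : ℂ) + ((1 / 2 : ℝ) : ℂ) * (((1 - α) / α : ℝ) : ℂ)) =
        (((1 - α) / (2 * α) : ℝ) : ℂ) := by
      rw [← Complex.ofReal_mul, ← Complex.ofReal_add]
      congr 1; field_simp; ring
    have e3 : (((α - 1) / 2 : ℝ) : ℂ) + ((α / 2 : ℝ) : ℂ) * (((1 - α) / α : ℝ) : ℂ) = 0 := by
      rw [← Complex.ofReal_mul, ← Complex.ofReal_add, ← Complex.ofReal_zero]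
      congr 1; field_simp; ring
    have hHW : H * (∑ i, cp (w i) 0 • P i) = H := by
      conv_rhs => rw [← Matrix.mul_one H, ← hsum]
      rw [Matrix.mul_sum, Matrix.mul_sum]
      refine Finset.sum_congr rfl fun i _ => ?_
      rcases exp_setup (retr_nonneg' hρ (hP i)) (retr_nonneg' hσ (hP i)) (hpq i) with
        h | ⟨a, b, h1, h2⟩
      · have h0 : H * P i = 0 := by
          rw [← frob_half' (hP i) hS'] at h
          rw [← mp_half_mul (hP i), ← Matrix.mul_assoc, frob_eq_zero h, Matrix.zero_mul]
        rw [Matrix.mul_smul, h0, smul_zero]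
      · have : cp (w i) 0 = 1 := by
          have hwp : 0 < w i := by
            simp only [hw]; rw [h1, h2]; positivity
          simp [cp, hwp.not_ge]
        rw [this, one_smul]
    simp only [hF]
    rw [e1, e2, e3, hHW, ← trace_mp]
    refine congrArg Matrix.trace ?_
    rw [hG, ← hV]
    have : mp hX ((α - 1 / 2 : ℝ) : ℂ) * (mp hX ((-(1/2) : ℝ) : ℂ) * V * H * (H * V)) =
      mp hX ((α - 1 / 2 : ℝ) : ℂ) * mp hX ((-(1/2) : ℝ) : ℂ) * (V * H * (H * V)) := by
      simp only [Matrix.mul_assoc]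
    rw [this, hXmp, ← mp_add, ← mp_add]
    congr 1; push_cast; ring
  have hQ : 0 ≤ ∑ i, retr (ρ * P i) ^ α * retr (σ * P i) ^ (1 - α) :=
    Finset.sum_nonneg fun i _ => mul_nonneg (Real.rpow_nonneg (retr_nonneg' hρ (hP i)) _)
      (Real.rpow_nonneg (retr_nonneg' hσ (hP i)) _)
  have h := hgood.three_lines ht0 ht1 (a := √(retr (mp hX α)) *
      √(∑ i, retr (ρ * P i) ^ α * retr (σ * P i) ^ (1 - α)))
    (b := ∑ i, retr (ρ * P i) ^ α * retr (σ * P i) ^ (1 - α)) ?_ ?_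
  · rw [hFt, Complex.norm_real] at h
    exact (le_abs_self _).trans h
  · intro z hz
    simp only [hF]
    refine (norm_trace_mul_le _ _).trans ?_
    have h1 : frob (mp hX (((α / 2 : ℝ) : ℂ) + ((-(α / 2) : ℝ) : ℂ) * z)) = retr (mp hX α) := by
      rw [frob_mp]; congr 3; simp [hz]; ring
    rw [h1]
    refine mul_le_mul_of_nonneg_left (Real.sqrt_le_sqrt ?_) (Real.sqrt_nonneg _)
    refine (hGc _).trans ?_
    rw [← frob_conjTranspose, Matrix.conjTranspose_mul, mp_conjTranspose]
    refine (mp_contr hσ (by simp [hz]) _).trans ?_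
    rw [Matrix.conjTranspose_mul, hHs, Matrix.conjTranspose_sum]
    simp only [Matrix.conjTranspose_smul, (hP _).1.eq]
    refine (kadison hP hsum _ H).trans (le_of_eq ?_)
    refine Finset.sum_congr rfl fun i _ => ?_
    rw [frob_half (hP i) hS, norm_star]
    exact scal3 (retr_nonneg' hρ (hP i)) (retr_nonneg' hσ (hP i)) (hpq i) hα0.ne' (by simp [hz])
  · intro z hz
    simp only [hF]
    rw [Matrix.mul_sum, Matrix.sum_mul, Matrix.mul_sum, Matrix.mul_sum, Matrix.trace_sum]
    refine (norm_sum_le _ _).trans (Finset.sum_le_sum fun i _ => ?_)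
    rw [Matrix.mul_smul, Matrix.smul_mul, Matrix.mul_smul, Matrix.mul_smul, Matrix.trace_smul,
      smul_eq_mul,
      norm_mul, ← scal4 (retr_nonneg' hρ (hP i)) (retr_nonneg' hσ (hP i)) (hpq i) hα0.ne'
      (z := (((α - 1) / 2 : ℝ) : ℂ) + ((α / 2 : ℝ) : ℂ) * z) (by simp [hz]; ring)]
    refine mul_le_mul_of_nonneg_left ?_ (norm_nonneg _)
    set S := mp hσ (((0 : ℝ) : ℂ) + ((1 / 2 : ℝ) : ℂ) * z) with hS
    set Y := mp hX (((α / 2 : ℝ) : ℂ) + ((-(α / 2) : ℝ) : ℂ) * z)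
    have hY : Contr Y := mp_contr hX (by simp [hz])
    have eP : Y * (G * (H * P i * S)) =
        (Y * G * (H * mp (hP i) ((1/2 : ℝ) : ℂ))) * (mp (hP i) ((1/2 : ℝ) : ℂ) * S) := by
      conv_lhs => rw [← mp_half_mul (hP i)]
      simp only [Matrix.mul_assoc]
    rw [eP]
    refine (norm_trace_mul_le _ _).trans ?_
    have h1 := (hY.mul hGc) (H * mp (hP i) ((1/2 : ℝ) : ℂ))
    rw [frob_half' (hP i) hS'] at h1
    rw [frob_half (hP i) (mp_mul_star_one hσ (by simp [hz]))]
    gcongr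

end Toolkit

/-- measured ≤ sandwiched.
For density operators with `supp ρ ⊆ supp σ` and `α ∈ [1/2,1) ∪ (1,∞)`:
`D_α^𝕄(ρ‖σ) ≤ D_α^*(ρ‖σ)`. -/
theorem measured_le_sandwiched
    {ι : Type*} [Fintype ι] [DecidableEq ι]
    (ρ σ : Matrix ι ι ℂ)
    (hρ : ρ.PosSemidef) (hρtr : ρ.trace = 1)
    (hσ : σ.PosSemidef) (hσtr : σ.trace = 1)
    (hsupp : ∀ v : ι → ℂ, σ.mulVec v = 0 → ρ.mulVec v = 0)
    (α : ℝ) (hα : (1 / 2 ≤ α ∧ α < 1) ∨ 1 < α) :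
    measuredRenyiDiv α ρ σ ≤ ((sandwichedRenyiDiv α ρ σ : ℝ) : EReal) := by
  have hα0 : 0 < α := by rcases hα with ⟨h, _⟩ | h <;> linarith
  have hα1 : α ≠ 1 := by rcases hα with h | h; exacts [h.2.ne, h.ne']
  have hg : (1 - α) / (2 * α) ≠ 0 := div_ne_zero (sub_ne_zero.2 hα1.symm) (by positivity)
  unfold measuredRenyiDiv
  refine iSup_le fun k => iSup_le fun P => iSup_le fun hP => iSup_le fun hsum => ?_
  have hpq : ∀ i, retr (σ * P i) = 0 → retr (ρ * P i) = 0 := by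
    intro i h
    have hS : (mp hσ ((1/2 : ℝ) : ℂ))ᴴ * mp hσ ((1/2 : ℝ) : ℂ) = σ := by
      rw [mp_self_adj, mp_half_mul]
    rw [← frob_half' (hP i) hS] at h
    have h1 : σ * P i = 0 := by
      rw [← mp_half_mul (hP i), ← mp_half_mul hσ, Matrix.mul_assoc, ← Matrix.mul_assoc _ _
        (mp (hP i) _), frob_eq_zero h]
      simp
    have h2 : ρ * P i = 0 := by
      ext a b
      have h3 : σ.mulVec (fun c => P i c b) = 0 := by
        funext a
        exact congrFun (congrFun h1 a) b
      exact congrFun (hsupp _ h3) a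
    rw [h2]; simp [retr]
  unfold renyiDivE
  rw [if_pos (Or.inr hpq), EReal.coe_le_coe_iff]
  unfold sandwichedRenyiDiv
  rw [rpowH_eq hσ hg]
  have hX : (mp hσ (((1 - α) / (2 * α) : ℝ) : ℂ) * ρ *
      mp hσ (((1 - α) / (2 * α) : ℝ) : ℂ)).PosSemidef := by
    have := hρ.mul_mul_conjTranspose_same (mp hσ (((1 - α) / (2 * α) : ℝ) : ℂ))
    rwa [mp_self_adj] at this
  obtain ⟨X, hXdef⟩ : ∃ X, X = mp hσ (((1 - α) / (2 * α) : ℝ) : ℂ) * ρ *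
      mp hσ (((1 - α) / (2 * α) : ℝ) : ℂ) := ⟨_, rfl⟩
  rw [← hXdef] at hX ⊢
  rw [rpowH_eq hX hα0.ne']
  have hr0 : ρ * mp hσ 0 = ρ := mul_mp_zero hσ hsupp
  have hl0 : mp hσ 0 * ρ = ρ := by
    have := congrArg Matrix.conjTranspose hr0
    rw [Matrix.conjTranspose_mul, mp_conjTranspose, hρ.1.eq] at this
    simpa using this
  have hback : mp hσ ((-((1 - α) / (2 * α)) : ℝ) : ℂ) * X *
      mp hσ ((-((1 - α) / (2 * α)) : ℝ) : ℂ) = ρ := by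
    have : mp hσ ((-((1 - α) / (2 * α)) : ℝ) : ℂ) * X *
      mp hσ ((-((1 - α) / (2 * α)) : ℝ) : ℂ) =
      (mp hσ ((-((1 - α) / (2 * α)) : ℝ) : ℂ) * mp hσ (((1 - α) / (2 * α) : ℝ) : ℂ)) * ρ *
      (mp hσ (((1 - α) / (2 * α) : ℝ) : ℂ) * mp hσ ((-((1 - α) / (2 * α)) : ℝ) : ℂ)) := by
      rw [hXdef]; simp only [Matrix.mul_assoc]
    rw [this, ← mp_add, ← mp_add, ← Complex.ofReal_add, ← Complex.ofReal_add, neg_add_cancel,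
      add_neg_cancel, Complex.ofReal_zero, hl0, hr0]
  have hρ0 : ρ ≠ 0 := by rintro rfl; simp at hρtr
  have hT : 0 < retr (mp hX α) := by
    have h2 : frob (mp hX ((α / 2 : ℝ) : ℂ)) = retr (mp hX α) := by
      rw [frob_mp]; congr 3; simp; ring
    refine lt_of_le_of_ne (by rw [← h2]; exact frob_nonneg _) fun h => hρ0 ?_
    have hX0 := mp_eq_zero_of hX α h.symm
    rw [← hback, hX0]; simp
  have hterm : ∀ i, 0 ≤ retr (ρ * P i) ^ α * retr (σ * P i) ^ (1 - α) := fun i =>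
    mul_nonneg (Real.rpow_nonneg (retr_nonneg' hρ (hP i)) _)
      (Real.rpow_nonneg (retr_nonneg' hσ (hP i)) _)
  have hQ : 0 < ∑ i, retr (ρ * P i) ^ α * retr (σ * P i) ^ (1 - α) := by
    have hs : ∑ i, retr (ρ * P i) = 1 := by
      unfold retr
      rw [← Complex.re_sum, ← Matrix.trace_sum, ← Matrix.mul_sum, hsum, Matrix.mul_one, hρtr]
      simp
    obtain ⟨i, hi⟩ : ∃ i, retr (ρ * P i) ≠ 0 := by
      by_contra! hcon
      simp [hcon] at hs
    refine Finset.sum_pos' (fun i _ => hterm i) ⟨i, Finset.mem_univ _, ?_⟩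
    have h1 : 0 < retr (ρ * P i) := lt_of_le_of_ne (retr_nonneg' hρ (hP i)) hi.symm
    have h2 : 0 < retr (σ * P i) :=
      lt_of_le_of_ne (retr_nonneg' hσ (hP i)) fun h => hi (hpq i h.symm)
    positivity
  rcases hα with ⟨ha, hb⟩ | ha
  · have h := core_lt hρ hσ hX ha hb hXdef hP hsum hpq
    generalize (∑ i, retr (ρ * P i) ^ α * retr (σ * P i) ^ (1 - α)) = Q at h hQ ⊢
    generalize retr (mp hX α) = T at h hT ⊢
    refine mul_le_mul_of_nonpos_left ?_ (inv_nonpos.2 (by linarith))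
    have hsT := Real.sqrt_pos.2 hT
    have hsQ := Real.sqrt_pos.2 hQ
    have h' := Real.log_le_log hT h
    rw [Real.log_mul (by positivity) (by positivity), Real.log_rpow (by positivity),
      Real.log_rpow hQ, Real.log_mul hsT.ne' hsQ.ne', Real.log_sqrt hT.le, Real.log_sqrt hQ.le] at h'
    have ht0 : 0 ≤ (1 - α) / α := div_nonneg (by linarith) hα0.le
    set t := (1 - α) / α
    by_contra! hcon
    nlinarith [mul_nonneg ht0 (sub_pos.2 hcon).le]
  · have h := core_gt hρ hσ hX ha (by
      have e : (α - 1) / (2 * α) = -((1 - α) / (2 * α)) := by rw [← neg_div]; ring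
      rw [e]; exact hback) hP hsum hpq
    generalize (∑ i, retr (ρ * P i) ^ α * retr (σ * P i) ^ (1 - α)) = Q at h hQ ⊢
    generalize retr (mp hX α) = T at h hT ⊢
    refine mul_le_mul_of_nonneg_left ?_ (inv_nonneg.2 (by linarith))
    have h' := Real.log_le_log hQ h
    rw [Real.log_mul (by positivity) (by positivity), Real.log_rpow hT, Real.log_rpow hQ] at h'
    have ht1 : 0 < 1 - (α - 1) / α := by
      rw [sub_pos, div_lt_one hα0]; linarith
    refine le_of_mul_le_mul_left ?_ ht1
    linarith

end
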